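/- (Reciprocity Theorem for words.) Let A be a finite alphabet, let u be a word over A with |u| = k, let R ⊆ {0,1,…,k}, let p = (u,R), and let p* = (u, {0,1,…,k} \ R). Then for every word w over A, binom(w; p) = ∑_{v ∈ A*} (−1)^{|v|−|u|} · binom(v; p*) · binom(w, v), where the sum is over all words v (only words v that are subwords of w with u ≤ v contribute nonzero terms, so the sum is finite). -/

import Mathlib

/-- The extension of an occurrence `φ : [k] → [n]` (here 0-indexed, as a map
`Fin k → Fin n`) to `{0,1,…,k+1}`, in 1-based position values: `φ(0) = 0`,
`φ(i) = (φ i) + 1` (converting 0-based to 1-based) for `1 ≤ i ≤ k`, and `φ(k+1) = n+1`. -/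
def extOcc {k n : ℕ} (φ : Fin k → Fin n) : ℕ → ℕ
  | 0 => 0
  | i + 1 => if h : i < k then (φ ⟨i, h⟩ : ℕ) + 1 else n + 1

/-- `vOccCount v u R` is the number of occurrences of the restricted word (pair) `(u,R)` in
`v`: strictly increasing letter-matching maps `φ` from the positions of `u` to those of `v`
such that `φ(i+1) = φ(i) + 1` for all `i ∈ R`, with the conventions `φ(0) = 0` and
`φ(|u|+1) = |v|+1`. -/
def vOccCount {A : Type*} [DecidableEq A] (v u : List A) (R : Finset ℕ) : ℕ :=
  ((Finset.univ : Finset (Fin u.length → Fin v.length)).filter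
    (fun φ => (∀ i j : Fin u.length, i < j → φ i < φ j) ∧
      (∀ i : Fin u.length, u.get i = v.get (φ i)) ∧
      ∀ i ∈ R, extOcc φ (i + 1) = extOcc φ i + 1)).card
/-- `subwordCount w v = binom(w,v)` is the number of occurrences of `v` as a (scattered,
unrestricted) subword of `w`. -/
def subwordCount {A : Type*} [DecidableEq A] (w v : List A) : ℕ := vOccCount w v ∅

/-! Deleting the first letter of the ambient word `b :: v` gives a Pascal-type recursion for the
number of occurrences of `(u, R)`: an occurrence either sends the first letter of `u` to `b`, or
avoids `b`, and the latter is possible exactly when `0 ∉ R`. For `p*` the second case is instead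
possible exactly when `0 ∈ R`. Now the subwords of `b :: w` are the subwords `v` of `w` and the
words `b :: v`. If `0 ∈ R`, the occurrences of `p*` in `b :: v` that avoid `b` are those in `v`
counted with the opposite sign, so they cancel; hence the alternating sum over the subwords obeys
the recursion of the left-hand side. -/

section PositionMaps

variable {k n : ℕ}

/-- The map `0 ↦ 0`, `i + 1 ↦ φ i + 1`, which extends an occurrence by a matched pair of first
letters. -/
def consZero (φ : Fin k → Fin n) : Fin (k + 1) → Fin (n + 1) :=
  Fin.cons 0 (Fin.succ ∘ φ)

@[simp]
theorem consZero_zero (φ : Fin k → Fin n) : consZero φ 0 = 0 := rfl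

@[simp]
theorem consZero_succ (φ : Fin k → Fin n) (i : Fin k) : consZero φ i.succ = (φ i).succ := rfl

theorem consZero_injective : Function.Injective (consZero : (Fin k → Fin n) → _) :=
  fun _ _ h => (Fin.succ_injective n).comp_left (Fin.cons_inj.1 h).2

theorem extOcc_succ_comp (φ : Fin k → Fin n) (i : ℕ) :
    extOcc (Fin.succ ∘ φ) (i + 1) = extOcc φ (i + 1) + 1 := by
  by_cases h : i < k <;> simp [extOcc, h]

theorem extOcc_consZero (φ : Fin k → Fin n) (i : ℕ) :
    extOcc (consZero φ) (i + 1) = extOcc φ i + 1 := by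
  cases i with
  | zero => simp [extOcc]
  | succ j => by_cases h : j < k <;> simp [extOcc, h, ← Fin.succ_mk]

theorem strictMono_succ_comp_iff {φ : Fin k → Fin n} :
    StrictMono (Fin.succ ∘ φ) ↔ StrictMono φ := by
  simp [StrictMono]

theorem strictMono_consZero_iff {φ : Fin k → Fin n} : StrictMono (consZero φ) ↔ StrictMono φ := by
  simp [StrictMono, Fin.forall_fin_succ]

theorem mem_range_succ_comp_iff {φ : Fin k → Fin (n + 1)} :
    φ ∈ Set.range (Fin.succ ∘ · : (Fin k → Fin n) → _) ↔ ∀ i, φ i ≠ 0 := by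
  refine ⟨?_, fun h => ⟨fun i => (φ i).pred (h i), funext fun i => Fin.succ_pred _ (h i)⟩⟩
  rintro ⟨ψ, rfl⟩ i
  exact Fin.succ_ne_zero _

theorem mem_range_consZero_or_mem_range_succ_comp {φ : Fin (k + 1) → Fin (n + 1)}
    (hφ : StrictMono φ) :
    φ ∈ Set.range consZero ∨ φ ∈ Set.range (Fin.succ ∘ · : (Fin (k + 1) → Fin n) → _) := by
  have succ_ne_zero (i : Fin k) : φ i.succ ≠ 0 := Fin.ne_zero_of_lt (hφ i.succ_pos)
  by_cases h0 : φ 0 = 0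
  · obtain ⟨ψ, hψ⟩ := mem_range_succ_comp_iff.2 succ_ne_zero
    exact .inl ⟨ψ, funext (Fin.cases h0.symm (congrFun hψ))⟩
  · exact .inr (mem_range_succ_comp_iff.2 (Fin.cases h0 succ_ne_zero))

end PositionMaps

section Occurrences

variable {A : Type*} {k n : ℕ}

/-- The occurrences of the pair `(x, R)` in `y`, for words given as functions on their positions.
The set `R` may contain numbers exceeding `k`, which impose no condition, so that `p*` is given by
the plain complement `Rᶜ`. -/
def occurrences (y : Fin n → A) (x : Fin k → A) (R : Set ℕ) : Set (Fin k → Fin n) :=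
  {φ | StrictMono φ ∧ (∀ i, x i = y (φ i)) ∧
    ∀ i ≤ k, i ∈ R → extOcc φ (i + 1) = extOcc φ i + 1}

theorem succ_comp_mem_occurrences_iff {y : Fin (n + 1) → A} {x : Fin k → A} {R : Set ℕ}
    {φ : Fin k → Fin n} :
    Fin.succ ∘ φ ∈ occurrences y x R ↔ 0 ∉ R ∧ φ ∈ occurrences (Fin.tail y) x R := by
  have gap_zero : extOcc (Fin.succ ∘ φ) 1 ≠ extOcc (Fin.succ ∘ φ) 0 + 1 := by
    by_cases h : 0 < k <;> simp [extOcc, h]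
  have gap_succ (i : ℕ) : extOcc (Fin.succ ∘ φ) (i + 1 + 1) = extOcc (Fin.succ ∘ φ) (i + 1) + 1 ↔
      extOcc φ (i + 1 + 1) = extOcc φ (i + 1) + 1 := by
    simp [extOcc_succ_comp]
  simp only [occurrences, Set.mem_ofPred_eq, strictMono_succ_comp_iff, Function.comp_apply,
    Fin.tail]
  constructor
  · rintro ⟨hmono, hletter, hgap⟩
    have h0 : 0 ∉ R := fun h => gap_zero (hgap 0 k.zero_le h)
    refine ⟨h0, hmono, hletter, fun i hi hiR => ?_⟩
    cases i with
    | zero => exact absurd hiR h0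
    | succ i => exact (gap_succ i).1 (hgap _ hi hiR)
  · rintro ⟨h0, hmono, hletter, hgap⟩
    refine ⟨hmono, hletter, fun i hi hiR => ?_⟩
    cases i with
    | zero => exact absurd hiR h0
    | succ i => exact (gap_succ i).2 (hgap _ hi hiR)

theorem consZero_mem_occurrences_iff {y : Fin (n + 1) → A} {x : Fin (k + 1) → A} {R : Set ℕ}
    {φ : Fin k → Fin n} :
    consZero φ ∈ occurrences y x R ↔
      x 0 = y 0 ∧ φ ∈ occurrences (Fin.tail y) (Fin.tail x) ((· + 1) ⁻¹' R) := by
  have gap_zero : extOcc (consZero φ) 1 = extOcc (consZero φ) 0 + 1 := extOcc_consZero φ 0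
  have gap_succ (i : ℕ) : extOcc (consZero φ) (i + 1 + 1) = extOcc (consZero φ) (i + 1) + 1 ↔
      extOcc φ (i + 1) = extOcc φ i + 1 := by
    simp [extOcc_consZero]
  simp only [occurrences, Set.mem_ofPred_eq, strictMono_consZero_iff, Fin.forall_fin_succ,
    consZero_zero, consZero_succ, Fin.tail, Set.mem_preimage]
  constructor
  · rintro ⟨hmono, ⟨hfirst, hletter⟩, hgap⟩
    exact ⟨hfirst, hmono, hletter, fun i hi hiR =>
      (gap_succ i).1 (hgap _ (Nat.succ_le_succ hi) hiR)⟩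
  · rintro ⟨hfirst, hmono, hletter, hgap⟩
    refine ⟨hmono, ⟨hfirst, hletter⟩, fun i hi hiR => ?_⟩
    cases i with
    | zero => exact gap_zero
    | succ i => exact (gap_succ i).2 (hgap i (Nat.le_of_succ_le_succ hi) hiR)

theorem ncard_preimage_succ_comp_occurrences (y : Fin (n + 1) → A) (x : Fin k → A) (R : Set ℕ)
    [Decidable (0 ∈ R)] :
    ((Fin.succ ∘ ·) ⁻¹' occurrences y x R).ncard =
      if 0 ∈ R then 0 else (occurrences (Fin.tail y) x R).ncard := by
  simp only [Set.preimage, succ_comp_mem_occurrences_iff]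
  split_ifs with h <;> simp [h]

theorem ncard_preimage_consZero_occurrences [DecidableEq A] (y : Fin (n + 1) → A)
    (x : Fin (k + 1) → A) (R : Set ℕ) :
    (consZero ⁻¹' occurrences y x R).ncard =
      if x 0 = y 0 then (occurrences (Fin.tail y) (Fin.tail x) ((· + 1) ⁻¹' R)).ncard else 0 := by
  simp only [Set.preimage, consZero_mem_occurrences_iff]
  split_ifs with h <;> simp [h]

theorem ncard_occurrences_of_zero (y : Fin (n + 1) → A) (x : Fin 0 → A) (R : Set ℕ)
    [Decidable (0 ∈ R)] :
    (occurrences y x R).ncard = if 0 ∈ R then 0 else (occurrences (Fin.tail y) x R).ncard := by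
  rw [← ncard_preimage_succ_comp_occurrences]
  refine (Set.ncard_preimage_of_injective_subset_range (Fin.succ_injective n).comp_left
    fun φ _ => ?_).symm
  exact mem_range_succ_comp_iff.2 fun i => i.elim0

theorem ncard_occurrences_succ [DecidableEq A] (y : Fin (n + 1) → A) (x : Fin (k + 1) → A)
    (R : Set ℕ) [Decidable (0 ∈ R)] :
    (occurrences y x R).ncard =
      (if x 0 = y 0 then (occurrences (Fin.tail y) (Fin.tail x) ((· + 1) ⁻¹' R)).ncard else 0) +
        if 0 ∈ R then 0 else (occurrences (Fin.tail y) x R).ncard := by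
  have cover : occurrences y x R = consZero '' (consZero ⁻¹' occurrences y x R) ∪
      (Fin.succ ∘ ·) '' ((Fin.succ ∘ ·) ⁻¹' occurrences y x R) := by
    rw [Set.image_preimage_eq_inter_range, Set.image_preimage_eq_inter_range,
      ← Set.inter_union_distrib_left, eq_comm, Set.inter_eq_left]
    exact fun φ hφ => mem_range_consZero_or_mem_range_succ_comp hφ.1
  have disjoint : Disjoint (consZero '' (consZero ⁻¹' occurrences y x R))
      ((Fin.succ ∘ ·) '' ((Fin.succ ∘ ·) ⁻¹' occurrences y x R)) := by
    rw [Set.disjoint_left]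
    rintro _ ⟨ψ, -, rfl⟩ ⟨χ, -, hχ⟩
    exact mem_range_succ_comp_iff.1 ⟨χ, hχ⟩ 0 rfl
  calc
    _ = _ := congrArg Set.ncard cover
    _ = (consZero ⁻¹' occurrences y x R).ncard +
        ((Fin.succ ∘ ·) ⁻¹' occurrences y x R).ncard := by
      rw [Set.ncard_union_eq disjoint, Set.ncard_image_of_injective _ consZero_injective,
        Set.ncard_image_of_injective _ (Fin.succ_injective n).comp_left]
    _ = _ := by
      rw [ncard_preimage_consZero_occurrences, ncard_preimage_succ_comp_occurrences]

theorem occurrences_eq_empty_of_lt (y : Fin n → A) (x : Fin k → A) (R : Set ℕ) (h : n < k) :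
    occurrences y x R = ∅ :=
  Set.eq_empty_of_forall_notMem fun φ hφ =>
    h.not_ge (by simpa using Fintype.card_le_of_injective φ hφ.1.injective)

end Occurrences

section OccCount

variable {A : Type*}

/-- The number of occurrences of `(u, R)` in `v`; only the elements of `R` up to `u.length`
matter. -/
noncomputable def occCount (v u : List A) (R : Set ℕ) : ℕ :=
  (occurrences v.get u.get R).ncard

theorem vOccCount_eq_occCount [DecidableEq A] (v u : List A) {R : Finset ℕ} {S : Set ℕ}
    (h : ∀ i, i ∈ R ↔ i ≤ u.length ∧ i ∈ S) : vOccCount v u R = occCount v u S := by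
  rw [vOccCount, ← Set.ncard_coe_finset, occCount, occurrences]
  congr 1
  ext φ
  simp [h, StrictMono]

theorem occCount_eq_zero_of_length_lt {v u : List A} (R : Set ℕ) (h : v.length < u.length) :
    occCount v u R = 0 := by
  rw [occCount, occurrences_eq_empty_of_lt _ _ _ h, Set.ncard_empty]

theorem occCount_nil_nil (R : Set ℕ) : occCount ([] : List A) [] R = 1 := by
  have all_occur : occurrences ([] : List A).get [].get R = Set.univ :=
    Set.eq_univ_of_forall fun φ => ⟨fun i => i.elim0, fun i => i.elim0, by simp [extOcc]⟩
  simp [occCount, all_occur]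

theorem occCount_cons_nil (b : A) (v : List A) (R : Set ℕ) [Decidable (0 ∈ R)] :
    occCount (b :: v) [] R = if 0 ∈ R then 0 else occCount v [] R :=
  ncard_occurrences_of_zero (n := v.length) _ _ R

theorem occCount_cons_cons [DecidableEq A] (b a : A) (v u : List A) (R : Set ℕ)
    [Decidable (0 ∈ R)] :
    occCount (b :: v) (a :: u) R =
      (if a = b then occCount v u ((· + 1) ⁻¹' R) else 0) +
        if 0 ∈ R then 0 else occCount v (a :: u) R :=
  ncard_occurrences_succ (n := v.length) (k := u.length) _ _ R

theorem occCount_empty_eq_count_sublists' [BEq (List A)] [LawfulBEq (List A)] (w v : List A) :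
    occCount w v ∅ = w.sublists'.count v := by
  classical
  induction w generalizing v with
  | nil =>
    cases v with
    | nil => simp [occCount_nil_nil]
    | cons a v => simp [occCount_eq_zero_of_length_lt]
  | cons b w ih =>
    rw [List.sublists'_cons, List.count_append, ← ih]
    cases v with
    | nil => simp [occCount_cons_nil, List.count_eq_zero]
    | cons a v =>
      by_cases hab : a = b
      · subst hab
        simp [occCount_cons_cons, List.count_map_of_injective _ _ List.cons_injective, ih, add_comm]
      · simp [occCount_cons_cons, hab, List.count_eq_zero, Ne.symm hab]

end OccCount

section Reciprocity

variable {A : Type*}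

/-- The term `(-1) ^ (|v| - |u|) * binom(v; p*)` of the reciprocity theorem for `p = (u, R)`; the
exponent `|v| + |u|` has the same parity and involves no truncated subtraction. -/
noncomputable def signedDualCount (v u : List A) (R : Set ℕ) : ℤ :=
  (-1) ^ (v.length + u.length) * occCount v u Rᶜ

theorem signedDualCount_eq (v u : List A) (R : Set ℕ) :
    signedDualCount v u R = (-1) ^ (v.length - u.length) * occCount v u Rᶜ := by
  rcases lt_or_ge v.length u.length with h | h
  · simp [signedDualCount, occCount_eq_zero_of_length_lt _ h]
  · rw [signedDualCount, neg_one_pow_congr]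
    grind

theorem signedDualCount_cons_nil (b : A) (v : List A) (R : Set ℕ) [Decidable (0 ∈ R)] :
    signedDualCount (b :: v) [] R = if 0 ∈ R then -signedDualCount v [] R else 0 := by
  simp only [signedDualCount, occCount_cons_nil, Set.mem_compl_iff]
  split_ifs <;> simp_all [pow_succ]

theorem signedDualCount_cons_cons [DecidableEq A] (b a : A) (v u : List A) (R : Set ℕ)
    [Decidable (0 ∈ R)] :
    signedDualCount (b :: v) (a :: u) R =
      (if a = b then signedDualCount v u ((· + 1) ⁻¹' R) else 0) +
        if 0 ∈ R then -signedDualCount v (a :: u) R else 0 := by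
  simp only [signedDualCount, occCount_cons_cons, Set.mem_compl_iff, Set.preimage_compl,
    List.length_cons]
  split_ifs <;> first | contradiction | (push_cast; ring)

theorem occCount_eq_sum_signedDualCount (w u : List A) (R : Set ℕ) :
    (occCount w u R : ℤ) = (w.sublists'.map (signedDualCount · u R)).sum := by
  classical
  induction w generalizing u R with
  | nil =>
    cases u with
    | nil => simp [signedDualCount, occCount_nil_nil]
    | cons a u => simp [signedDualCount, occCount_eq_zero_of_length_lt]
  | cons b w ih =>
    have sum_neg (u : List A) :
        (w.sublists'.map (-signedDualCount · u R)).sum = -occCount w u R := by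
      simp [ih, List.sum_neg, Function.comp_def]
    rw [List.sublists'_cons, List.map_append, List.sum_append, ← ih, List.map_map]
    cases u with
    | nil =>
      simp only [Function.comp_def, signedDualCount_cons_nil, occCount_cons_nil]
      split_ifs <;> simp [sum_neg]
    | cons a u =>
      simp only [Function.comp_def, signedDualCount_cons_cons, occCount_cons_cons,
        List.sum_map_add]
      split_ifs <;> simp [← ih, sum_neg, add_comm]

theorem occCount_reciprocity [DecidableEq A] (w u : List A) (R : Set ℕ) :
    (occCount w u R : ℤ) =
      ∑ v ∈ w.sublists.toFinset,
        (-1 : ℤ) ^ (v.length - u.length) * occCount v u Rᶜ * occCount w v ∅ := by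
  have sublists_toFinset : w.sublists.toFinset = w.sublists'.toFinset := by ext; simp
  rw [occCount_eq_sum_signedDualCount, Finset.sum_list_map_count, sublists_toFinset]
  simp only [← occCount_empty_eq_count_sublists', signedDualCount_eq, nsmul_eq_mul,
    Nat.cast_comm]

theorem vOccCount_reciprocity_general {K : Type*} [Ring K] [DecidableEq A] (u w : List A)
    (R : Finset ℕ) (hR : R ⊆ Finset.range (u.length + 1)) :
    (vOccCount w u R : K) =
      ∑ v ∈ w.sublists.toFinset,
        (-1 : K) ^ (v.length - u.length) *
          vOccCount v u (Finset.range (u.length + 1) \ R) * subwordCount w v := by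
  have hp : vOccCount w u R = occCount w u R :=
    vOccCount_eq_occCount w u fun i => by simpa [Nat.lt_succ_iff] using @hR i
  have hp_dual (v : List A) :
      vOccCount v u (Finset.range (u.length + 1) \ R) = occCount v u (R : Set ℕ)ᶜ :=
    vOccCount_eq_occCount v u fun i => by simp
  have hsubword (v : List A) : subwordCount w v = occCount w v ∅ :=
    vOccCount_eq_occCount w v (by simp)
  simp only [hp, hp_dual, hsubword]
  exact_mod_cast congrArg (Int.cast : ℤ → K) (occCount_reciprocity w u R)

end Reciprocity

/-- Reciprocity theorem for words: for `p = (u,R)` with `R ⊆ {0,…,|u|}` and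
`p* = (u, {0,…,|u|} \ R)`, and every word `w`,
`binom(w; p) = ∑_v (−1)^{|v|−|u|} · binom(v; p*) · binom(w,v)`,
the sum being over all words `v`; only subwords `v` of `w` contribute nonzero terms, so it
suffices to sum over the (distinct) sublists of `w`. -/
theorem vOccCount_reciprocity {A : Type*} [Fintype A] [DecidableEq A] (u w : List A)
    (R : Finset ℕ) (hR : R ⊆ Finset.range (u.length + 1)) :
    (vOccCount w u R : ℚ) =
      ∑ v ∈ w.sublists.toFinset,
        (-1 : ℚ) ^ (v.length - u.length) *
          vOccCount v u (Finset.range (u.length + 1) \ R) * subwordCount w v :=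
  vOccCount_reciprocity_general u w R hR
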